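/- arXiv:1710.04335 — 4 statements merged into one kernel-verified Lean document; each statement's English description precedes it below -/
import Mathlib

section
/- Let V be a real vector space and Z := V × Module.Dual ℝ V with the canonical symplectic bilinear form ω((x,p))((y,q)) := p(y) − q(x). Define the tangent-lift form ω̇ on Z × Z by ω̇((z,ż))((w,ẇ)) := ω(z)(ẇ) + ω(ż)(w). Define τ : Z × Z → (V × V) × Module.Dual ℝ (V × V) by τ((x,p),(ẋ,ṗ)) := ((x,ẋ), L(ṗ,p)), where L(ṗ,p) is the linear functional on V × V given by L(ṗ,p)(a,b) := ṗ(a) + p(b), and let Ω be the canonical symplectic bilinear form on (V × V) × Module.Dual ℝ (V × V), Ω((X,Ξ))((Y,Η)) := Ξ(Y) − Η(X). Then τ is a linear equivalence and Ω(τ(z))(τ(z')) = ω̇(z)(z') for all z, z' ∈ Z × Z. -/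
/-!
Under `τ`, a point `(x, p, ẋ, ṗ)` becomes a covector on `V × V` at `(x, ẋ)`. The cotangent bundle of
a product is the orthogonal sum of those of the factors, so `Ω` splits as
`ω (x, ṗ) (x', ṗ') + ω (ẋ, p) (ẋ', p')`. Regrouping these four pairings according to which of the
two points carries the dot gives `ω (x, p) (ẋ', ṗ') + ω (ẋ, ṗ) (x', p')`, the Leibniz rule for `ω`.
-/

open Module

section Semiring

variable {R M : Type*} [CommSemiring R] [AddCommMonoid M] [Module R M]

/-- The tangent lift (formal time derivative) `Ḃ` of a bilinear form `B`, on pairs of a point and a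
velocity: the coefficient of `t` in `B (z + t • ż) (w + t • ẇ)`. -/
def tangentLift (B : LinearMap.BilinForm R M) : LinearMap.BilinForm R (M × M) :=
  B.compl₁₂ (LinearMap.fst R M M) (LinearMap.snd R M M) +
    B.compl₁₂ (LinearMap.snd R M M) (LinearMap.fst R M M)

@[simp]
theorem tangentLift_apply (B : LinearMap.BilinForm R M) (z w : M × M) :
    tangentLift B z w = B z.1 w.2 + B z.2 w.1 :=
  rfl

variable (R M)

/-- The flat Tulczyjew isomorphism `T(T*M) ≃ T*(TM)`. The two momenta are swapped: the functional on
`M × M` has `ṗ` as its component dual to `x` and `p` as its component dual to `ẋ`. -/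
def tulczyjewEquiv :
    ((M × Dual R M) × (M × Dual R M)) ≃ₗ[R] (M × M) × Dual R (M × M) :=
  LinearEquiv.prodProdProdComm R M (Dual R M) M (Dual R M) ≪≫ₗ
    (LinearEquiv.refl R (M × M)).prodCongr
      (LinearEquiv.prodComm R (Dual R M) (Dual R M) ≪≫ₗ dualProdDualEquivDual R M M)

variable {R M}

theorem tulczyjewEquiv_apply (z : (M × Dual R M) × (M × Dual R M)) :
    tulczyjewEquiv R M z = ((z.1.1, z.2.1), z.2.2.coprod z.1.2) :=
  rfl

end Semiring

section Ring

variable (R M : Type*) {N : Type*} [CommRing R] [AddCommMonoid M] [Module R M]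
  [AddCommMonoid N] [Module R N]

/-- The canonical symplectic form of the flat cotangent bundle `T*M = M × Dual R M`, with the sign
convention in which the momentum of the first argument is paired positively. -/
def canonicalSymplecticForm : LinearMap.BilinForm R (M × Dual R M) :=
  let pairing : LinearMap.BilinForm R (M × Dual R M) :=
    (LinearMap.snd R M (Dual R M)).compl₂ (LinearMap.fst R M (Dual R M))
  pairing - pairing.flip

variable {R M}

@[simp]
theorem canonicalSymplecticForm_apply (z w : M × Dual R M) :
    canonicalSymplecticForm R M z w = z.2 w.1 - w.2 z.1 :=
  rfl

theorem canonicalSymplecticForm_prod_coprod (x x' : M) (y y' : N) (f f' : Dual R M)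
    (g g' : Dual R N) :
    canonicalSymplecticForm R (M × N) ((x, y), f.coprod g) ((x', y'), f'.coprod g') =
      canonicalSymplecticForm R M (x, f) (x', f') +
        canonicalSymplecticForm R N (y, g) (y', g') := by
  simp only [canonicalSymplecticForm_apply, LinearMap.coprod_apply]
  ring

theorem canonicalSymplecticForm_tulczyjewEquiv (z z' : (M × Dual R M) × (M × Dual R M)) :
    canonicalSymplecticForm R (M × M) (tulczyjewEquiv R M z) (tulczyjewEquiv R M z') =
      canonicalSymplecticForm R M (z.1.1, z.2.2) (z'.1.1, z'.2.2) +
        canonicalSymplecticForm R M (z.2.1, z.1.2) (z'.2.1, z'.1.2) := by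
  rw [tulczyjewEquiv_apply, tulczyjewEquiv_apply, canonicalSymplecticForm_prod_coprod]

theorem tulczyjew_flat_general (z z' : (M × Dual R M) × (M × Dual R M)) :
    canonicalSymplecticForm R (M × M) (tulczyjewEquiv R M z) (tulczyjewEquiv R M z') =
      tangentLift (canonicalSymplecticForm R M) z z' := by
  rw [canonicalSymplecticForm_tulczyjewEquiv, tangentLift_apply]
  simp only [canonicalSymplecticForm_apply]
  ring

end Ring

/-- Flat model of the Tulczyjew isomorphism `T(T*M) ≅ T*(TM)`:
`(V × V*) × (V × V*)` models `T(T*V)` with points `((x,p),(ẋ,pdot))`, `ω̇` is the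
tangent lift of the canonical symplectic form `ω` of `T*V`, and
`τ((x,p),(ẋ,pdot)) = ((x,ẋ), L(pdot,p))` with `L(pdot,p)(a,b) = pdot(a) + p(b)` is a linear
equivalence onto `(V × V) × (V × V)*` carrying `ω̇` to the canonical symplectic
form `Ω`. -/
theorem tulczyjew_flat (V : Type*) [AddCommGroup V] [Module ℝ V] :
    let ω : (V × Module.Dual ℝ V) → (V × Module.Dual ℝ V) → ℝ := fun z w =>
      z.2 w.1 - w.2 z.1
    let ωdot : ((V × Module.Dual ℝ V) × (V × Module.Dual ℝ V)) →
        ((V × Module.Dual ℝ V) × (V × Module.Dual ℝ V)) → ℝ := fun z w =>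
      ω z.1 w.2 + ω z.2 w.1
    let L : Module.Dual ℝ V → Module.Dual ℝ V → Module.Dual ℝ (V × V) := fun pdot p =>
      pdot.comp (LinearMap.fst ℝ V V) + p.comp (LinearMap.snd ℝ V V)
    let τ : ((V × Module.Dual ℝ V) × (V × Module.Dual ℝ V)) →
        ((V × V) × Module.Dual ℝ (V × V)) := fun z =>
      ((z.1.1, z.2.1), L z.2.2 z.1.2)
    let Ω : ((V × V) × Module.Dual ℝ (V × V)) →
        ((V × V) × Module.Dual ℝ (V × V)) → ℝ := fun X Y =>
      X.2 Y.1 - Y.2 X.1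
    (∃ e : ((V × Module.Dual ℝ V) × (V × Module.Dual ℝ V)) ≃ₗ[ℝ]
        ((V × V) × Module.Dual ℝ (V × V)), ⇑e = τ) ∧
      ∀ z z', Ω (τ z) (τ z') = ωdot z z' :=
  ⟨⟨tulczyjewEquiv ℝ V, funext tulczyjewEquiv_apply⟩, tulczyjew_flat_general⟩
end

section
/- Let Z be a real vector space and B : Z →ₗ[ℝ] Z →ₗ[ℝ] ℝ a bilinear form. For a submodule P ⊆ Z let orth_B(P) := {z ∈ Z | ∀ p ∈ P, B(p)(z) = 0}, and call P Lagrangian with respect to B if P = orth_B(P). Define the parity-swap lift A_B on Z × Z by A_B((z,ż))((w,ẇ)) := B(z)(ẇ) − B(ż)(w). If P is Lagrangian with respect to B, then the submodule P × P ⊆ Z × Z (Submodule.prod P P) is Lagrangian with respect to A_B. -/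
/-!
The form `B z ẇ - B ż w` pairs the first factor of `Z × Z` with the second, so orthogonality to a
product submodule decouples: testing against `(p, 0)` and `(0, q)` constrains the second and the
first component separately. The orthogonal of `P × Q` is therefore `Qᗮ × Pᗮ`, and `P × P` is its
own orthogonal exactly when `P` is.
-/

theorem submodule_prod_self_inj {R M : Type*} [Semiring R] [AddCommMonoid M] [Module R M]
    {P Q : Submodule R M} : P.prod P = Q.prod Q ↔ P = Q := by
  refine ⟨fun h ↦ ?_, fun h ↦ h ▸ rfl⟩
  simpa only [Submodule.prod_comap_inl] using congrArg (Submodule.comap (LinearMap.inl R M M)) h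

section ParitySwapLift

variable {R R₁ R₂ M M₁ M₂ : Type*} [CommSemiring R] [CommSemiring R₁] [CommSemiring R₂]
  [AddCommGroup M] [Module R M] [AddCommMonoid M₁] [Module R₁ M₁] [AddCommMonoid M₂] [Module R₂ M₂]
  {I₁ : R₁ →+* R} {I₂ : R₂ →+* R}

/-- The parity-swap lift `A_B` of a sesquilinear map `B`, modelling the form `∂ω` induced by `ω` on
the antitangent bundle. An element `(z, ż)` of the product is a base point `z` with a fibre
coordinate `ż`. -/
def paritySwapLift (B : M₁ →ₛₗ[I₁] M₂ →ₛₗ[I₂] M) : M₁ × M₁ →ₛₗ[I₁] M₂ × M₂ →ₛₗ[I₂] M :=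
  (B.comp (LinearMap.fst R₁ M₁ M₁)).compl₂ (LinearMap.snd R₂ M₂ M₂) -
    (B.comp (LinearMap.snd R₁ M₁ M₁)).compl₂ (LinearMap.fst R₂ M₂ M₂)

theorem paritySwapLift_apply (B : M₁ →ₛₗ[I₁] M₂ →ₛₗ[I₂] M) (v : M₁ × M₁) (w : M₂ × M₂) :
    paritySwapLift B v w = B v.1 w.2 - B v.2 w.1 :=
  rfl

theorem orthogonalBilin_paritySwapLift_prod (B : M₁ →ₛₗ[I₁] M₂ →ₛₗ[I₂] M)
    (P Q : Submodule R₁ M₁) :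
    (P.prod Q).orthogonalBilin (paritySwapLift B) =
      (Q.orthogonalBilin B).prod (P.orthogonalBilin B) := by
  ext w
  simp only [Submodule.mem_prod, Submodule.mem_orthogonalBilin_iff]
  constructor
  · intro hw
    constructor
    · intro q hq
      simpa [paritySwapLift_apply] using hw (0, q) ⟨P.zero_mem, hq⟩
    · intro p hp
      simpa [paritySwapLift_apply] using hw (p, 0) ⟨hp, Q.zero_mem⟩
  · rintro ⟨hwQ, hwP⟩ u ⟨huP, huQ⟩
    rw [paritySwapLift_apply, hwP u.1 huP, hwQ u.2 huQ, sub_zero]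

end ParitySwapLift

section Lagrangian

variable {R R₁ M M₁ : Type*} [CommSemiring R] [CommSemiring R₁]
  [AddCommMonoid M₁] [Module R₁ M₁] {I₁ I₂ : R₁ →+* R}

/-- A submodule is Lagrangian for a sesquilinear map `B` if it equals its own orthogonal. As `B` may
be neither symmetric nor alternating, the side matters: the orthogonal is
`{z | ∀ p ∈ P, B p z = 0}`. -/
def IsLagrangian [AddCommMonoid M] [Module R M] (B : M₁ →ₛₗ[I₁] M₁ →ₛₗ[I₂] M)
    (P : Submodule R₁ M₁) : Prop :=
  P = P.orthogonalBilin B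

theorem parity_swap_lift_lagrangian_flat_general [AddCommGroup M] [Module R M]
    (B : M₁ →ₛₗ[I₁] M₁ →ₛₗ[I₂] M) (P : Submodule R₁ M₁) :
    IsLagrangian (paritySwapLift B) (P.prod P) ↔ IsLagrangian B P := by
  rw [IsLagrangian, IsLagrangian, orthogonalBilin_paritySwapLift_prod,
    submodule_prod_self_inj]

end Lagrangian

/-- Flat linear model of the corollaries that for a Lagrangian submanifold `P` of
`ΠT*M` (resp. `T*M`), the antitangent bundle `ΠTP` is a Lagrangian submanifold of
`ΠT(ΠT*M) = T*(ΠTM)` (resp. `ΠT(T*M) = ΠT*(ΠTM)`) with respect to the induced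
symplectic form `∂ω`: if a subspace `P ⊆ Z` equals its `B`-orthogonal, then
`P × P ⊆ Z × Z` equals its orthogonal with respect to the parity-swap lift
`A_B((z,ż))((w,ẇ)) = B(z)(ẇ) - B(ż)(w)`. -/
theorem parity_swap_lift_lagrangian_flat {Z : Type*} [AddCommGroup Z] [Module ℝ Z]
    (B : Z →ₗ[ℝ] Z →ₗ[ℝ] ℝ) (P : Submodule ℝ Z)
    (hP : ∀ z : Z, z ∈ P ↔ ∀ p ∈ P, B p z = 0) :
    let A : Z × Z → Z × Z → ℝ := fun v w => B v.1 w.2 - B v.2 w.1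
    ∀ v : Z × Z, v ∈ Submodule.prod P P ↔ ∀ u ∈ Submodule.prod P P, A u v = 0 := by
  intro _ v
  exact SetLike.ext_iff.mp
    ((parity_swap_lift_lagrangian_flat_general B P).mpr (SetLike.ext hP)) v
end

section
/- Let E, F be real normed vector spaces and φ : E → F with ContDiff ℝ 2 φ. Define the tangent map Tφ : E × E → F × F by Tφ(x,v) := (φ(x), fderiv ℝ φ x v). For a differentiable map ψ : A → B between real normed spaces, define its cotangent-lift relation R_ψ ⊆ (B × (B →L[ℝ] ℝ)) × (A × (A →L[ℝ] ℝ)) by ((y,q),(x,p)) ∈ R_ψ iff y = ψ(x) and p(a) = q(fderiv ℝ ψ x a) for all a ∈ A. For ṗ, p ∈ E →L[ℝ] ℝ let L(ṗ,p) ∈ (E × E) →L[ℝ] ℝ be L(ṗ,p)(a,b) := ṗ(a) + p(b), and similarly for F. Then for all x, ẋ ∈ E, y, ẏ ∈ F, p, ṗ ∈ E →L[ℝ] ℝ and q, q̇ ∈ F →L[ℝ] ℝ: (((y,ẏ), L(q̇,q)), ((x,ẋ), L(ṗ,p))) ∈ R_{Tφ} if and only if [ y = φ(x), and p(a) = q(fderiv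 ℝ φ x a) for all a ∈ E, and ẏ = fderiv ℝ φ x ẋ, and ṗ(a) = q̇(fderiv ℝ φ x a) + q(fderiv ℝ (fun z => fderiv ℝ φ z ẋ) x a) for all a ∈ E ]. -/
/-!
In the splitting `E × E`, the derivative of `Tφ` at `(x, v)` is the block lower triangular operator
with both diagonal entries `Dφ x` and lower left entry `B = D(z ↦ Dφ z v) x`. Pulling `L(q̇, q)`
back along it gives `L(q̇ ∘ Dφ x + q ∘ B, q ∘ Dφ x)`: the second component is the covector of `R_φ`
and the first is its linearization. Comparing both with `L(ṗ, p)` gives the result.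
-/

open scoped Topology

namespace Tulczyjew

section BlockOperators

variable {R M₁ M₂ N₁ N₂ G : Type*} [Semiring R]
  [AddCommMonoid M₁] [Module R M₁] [TopologicalSpace M₁]
  [AddCommMonoid M₂] [Module R M₂] [TopologicalSpace M₂]
  [AddCommMonoid N₁] [Module R N₁] [TopologicalSpace N₁]
  [AddCommMonoid N₂] [Module R N₂] [TopologicalSpace N₂]
  [AddCommMonoid G] [Module R G] [TopologicalSpace G] [ContinuousAdd G]

theorem coprod_inj {f₁ g₁ : M₁ →L[R] G} {f₂ g₂ : M₂ →L[R] G} :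
    f₁.coprod f₂ = g₁.coprod g₂ ↔ f₁ = g₁ ∧ f₂ = g₂ := by
  refine ⟨fun h => ⟨?_, ?_⟩, fun ⟨h₁, h₂⟩ => h₁ ▸ h₂ ▸ rfl⟩
  · simpa using congrArg (· ∘L .inl R M₁ M₂) h
  · simpa using congrArg (· ∘L .inr R M₁ M₂) h

theorem coprod_comp_prod (q₁ : N₁ →L[R] G) (q₂ : N₂ →L[R] G)
    (f₁ : M₁ →L[R] N₁) (f₂ : M₁ →L[R] N₂) :
    q₁.coprod q₂ ∘L f₁.prod f₂ = q₁ ∘L f₁ + q₂ ∘L f₂ :=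
  rfl

theorem coprod_comp_lowerTriangular [ContinuousAdd N₁] [ContinuousAdd N₂]
    (q₁ : N₁ →L[R] G) (q₂ : N₂ →L[R] G)
    (A : M₁ →L[R] N₁) (B : M₁ →L[R] N₂) (D : M₂ →L[R] N₂) :
    q₁.coprod q₂ ∘L (A.prod B).coprod (.prod 0 D) = (q₁ ∘L A + q₂ ∘L B).coprod (q₂ ∘L D) := by
  simp only [ContinuousLinearMap.comp_coprod, coprod_comp_prod, ContinuousLinearMap.comp_zero,
    zero_add]

end BlockOperators

variable {𝕜 E F G : Type*} [NontriviallyNormedField 𝕜]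
  [NormedAddCommGroup E] [NormedSpace 𝕜 E]
  [NormedAddCommGroup F] [NormedSpace 𝕜 F]
  [NormedAddCommGroup G] [NormedSpace 𝕜 G]

section ApplyPair

variable {c : E → F →L[𝕜] G} {x : E}

theorem fderiv_clm_apply_const (hc : DifferentiableAt 𝕜 c x) (v : F) :
    fderiv 𝕜 (fun z => c z v) x = (fderiv 𝕜 c x).flip v := by
  simpa using (hc.hasFDerivAt.clm_apply (hasFDerivAt_const v x)).fderiv

theorem hasFDerivAt_clm_apply_fst_snd (hc : DifferentiableAt 𝕜 c x) (v : F) :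
    HasFDerivAt (fun w : E × F => c w.1 w.2)
      ((fderiv 𝕜 (fun z => c z v) x).coprod (c x)) (x, v) := by
  have hc_fst : HasFDerivAt (fun w : E × F => c w.1) (fderiv 𝕜 c x ∘L .fst 𝕜 E F) (x, v) :=
    HasFDerivAt.comp (x, v) hc.hasFDerivAt hasFDerivAt_fst
  rw [fderiv_clm_apply_const hc]
  refine (hc_fst.clm_apply hasFDerivAt_snd).congr_fderiv ?_
  ext <;> simp

end ApplyPair

variable (𝕜) in
/-- The tangent map `Tφ : TE → TF` of a map between normed spaces, with `TE` identified with
`E × E` (base point first, velocity second). -/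
noncomputable def tangentLift (φ : E → F) (w : E × E) : F × F :=
  (φ w.1, fderiv 𝕜 φ w.1 w.2)

variable (𝕜 G) in
/-- The canonical relation `R_ψ` from `T*E` to `T*F` of a map `ψ : E → F`, written target first.
Covectors may take values in any normed space `G`; the cotangent bundles are the case `G = 𝕜`. -/
def cotangentLift (ψ : E → F) : SetRel (F × (F →L[𝕜] G)) (E × (E →L[𝕜] G)) :=
  {r | r.1.1 = ψ r.2.1 ∧ r.2.2 = r.1.2 ∘L fderiv 𝕜 ψ r.2.1}

theorem tangentLift_mk (φ : E → F) (x v : E) :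
    tangentLift 𝕜 φ (x, v) = (φ x, fderiv 𝕜 φ x v) :=
  rfl

theorem mk_mem_cotangentLift {ψ : E → F} {x : E} {y : F} {p : E →L[𝕜] G} {q : F →L[𝕜] G} :
    ((y, q), (x, p)) ∈ cotangentLift 𝕜 G ψ ↔ y = ψ x ∧ p = q ∘L fderiv 𝕜 ψ x :=
  Iff.rfl

theorem hasFDerivAt_tangentLift {φ : E → F} {x : E} (hφ : DifferentiableAt 𝕜 φ x)
    (hφ' : DifferentiableAt 𝕜 (fderiv 𝕜 φ) x) (v : E) :
    HasFDerivAt (tangentLift 𝕜 φ)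
      (((fderiv 𝕜 φ x).prod (fderiv 𝕜 (fun z => fderiv 𝕜 φ z v) x)).coprod
        (.prod 0 (fderiv 𝕜 φ x))) (x, v) := by
  have hφ_fst : HasFDerivAt (fun w : E × E => φ w.1) (fderiv 𝕜 φ x ∘L .fst 𝕜 E E) (x, v) :=
    HasFDerivAt.comp (x, v) hφ.hasFDerivAt hasFDerivAt_fst
  refine (hφ_fst.prodMk (hasFDerivAt_clm_apply_fst_snd hφ' v)).congr_fderiv ?_
  ext <;> simp

end Tulczyjew

open Tulczyjew in
theorem tangent_of_map_relation_flat_general {𝕜 E F G : Type*} [NontriviallyNormedField 𝕜]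
    [NormedAddCommGroup E] [NormedSpace 𝕜 E]
    [NormedAddCommGroup F] [NormedSpace 𝕜 F]
    [NormedAddCommGroup G] [NormedSpace 𝕜 G]
    {φ : E → F} {x : E} (hφ : ∀ᶠ z in 𝓝 x, DifferentiableAt 𝕜 φ z)
    (hφ' : DifferentiableAt 𝕜 (fderiv 𝕜 φ) x)
    (xdot : E) (y ydot : F) (p pdot : E →L[𝕜] G) (q qdot : F →L[𝕜] G) :
    (((y, ydot), qdot.coprod q), ((x, xdot), pdot.coprod p)) ∈
        cotangentLift 𝕜 G (tangentLift 𝕜 φ) ↔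
      ((y, q), (x, p)) ∈ cotangentLift 𝕜 G φ ∧ ydot = fderiv 𝕜 φ x xdot ∧
        pdot = qdot ∘L fderiv 𝕜 φ x + q ∘L fderiv 𝕜 (fun z => fderiv 𝕜 φ z xdot) x := by
  rw [mk_mem_cotangentLift, mk_mem_cotangentLift,
    (hasFDerivAt_tangentLift hφ.self_of_nhds hφ' xdot).fderiv, coprod_comp_lowerTriangular,
    coprod_inj, tangentLift_mk, Prod.mk_inj]
  tauto

/-- Flat version of the Proposition: for a smooth map `φ : M₁ → M₂`, the canonical
relation `R_{Tφ}` of the tangent map `Tφ : TM₁ → TM₂` is the tangent prolongation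
`T R_φ` of the canonical relation `R_φ` of `φ`, under the Tulczyjew identification
`T*(TM) = T(T*M)` in which `ṗ` is conjugate to `x` and `p` is conjugate to `ẋ`
(encoded by the functional `L(ṗ,p)(a,b) = ṗ(a) + p(b)`).  Membership of
`(((y,ẏ), L(q̇,q)), ((x,ẋ), L(ṗ,p)))` in the cotangent-lift relation of `Tφ` is
equivalent to: the base point lies in `R_φ` and the velocities satisfy the
linearized defining equations. -/
theorem tangent_of_map_relation_flat {E F : Type*}
    [NormedAddCommGroup E] [NormedSpace ℝ E]
    [NormedAddCommGroup F] [NormedSpace ℝ F]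
    (φ : E → F) (hφ : ContDiff ℝ 2 φ)
    (x xdot : E) (y ydot : F) (p pdot : E →L[ℝ] ℝ) (q qdot : F →L[ℝ] ℝ) :
    let Tφ : E × E → F × F := fun v => (φ v.1, fderiv ℝ φ v.1 v.2)
    let LE : (E →L[ℝ] ℝ) → (E →L[ℝ] ℝ) → ((E × E) →L[ℝ] ℝ) := fun u₁ u₂ =>
      u₁.comp (ContinuousLinearMap.fst ℝ E E) + u₂.comp (ContinuousLinearMap.snd ℝ E E)
    let LF : (F →L[ℝ] ℝ) → (F →L[ℝ] ℝ) → ((F × F) →L[ℝ] ℝ) := fun u₁ u₂ =>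
      u₁.comp (ContinuousLinearMap.fst ℝ F F) + u₂.comp (ContinuousLinearMap.snd ℝ F F)
    -- `((Y,Q),(X,P)) ∈ R_ψ ↔ Y = ψ X ∧ ∀ a, P a = Q (fderiv ℝ ψ X a)`, applied to `ψ = Tφ`:
    ((y, ydot) = Tφ (x, xdot) ∧
        ∀ a : E × E, LE pdot p a = LF qdot q (fderiv ℝ Tφ (x, xdot) a)) ↔
      (y = φ x ∧ (∀ a : E, p a = q (fderiv ℝ φ x a)) ∧ ydot = fderiv ℝ φ x xdot ∧
        ∀ a : E, pdot a = qdot (fderiv ℝ φ x a) +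
          q (fderiv ℝ (fun z => fderiv ℝ φ z xdot) x a)) := by
  simpa only [Tulczyjew.mk_mem_cotangentLift, ContinuousLinearMap.ext_iff, and_assoc] using!
    tangent_of_map_relation_flat_general (.of_forall (hφ.differentiable two_ne_zero))
      ((hφ.fderiv_right one_add_one_eq_two.le).differentiable one_ne_zero x)
      xdot y ydot p pdot q qdot
end

section
/- Let E, F be real normed vector spaces, Q := F →L[ℝ] ℝ, and S : E × Q → ℝ with ContDiff ℝ 2 S. Then for all x, ẋ ∈ E, q, q̇ ∈ Q, y, ẏ ∈ F, and p, ṗ ∈ E →L[ℝ] ℝ, the following two systems of equations are equivalent. System (I) (the relation generated by the time-derivative generating function Ṡ((x,ẋ),(q̇,q)) := fderiv ℝ S (x,q) (ẋ,q̇)): (i) fderiv ℝ S (x,q) (0,η) = η(y) for all η ∈ Q; (ii) fderiv ℝ (fun w => fderiv ℝ S w (ẋ,q̇)) (x,q) (0,η) = η(ẏ) for all η ∈ Q; (iii) fderiv ℝ (fun w => fderiv ℝ S w (ẋ,q̇)) (x,q) (a,0) = ṗ(a) for all a ∈ E; (iv) fderiv ℝ S (x,q) (b,0) = p(b) for all b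 ∈ E. System (II) (the tangent prolongation of the relation generated by S): (i') fderiv ℝ S (x,q) (0,η) = η(y) for all η ∈ Q; (ii') fderiv ℝ S (x,q) (b,0) = p(b) for all b ∈ E; (iii') fderiv ℝ (fun w => fderiv ℝ S w (0,η)) (x,q) (ẋ,q̇) = η(ẏ) for all η ∈ Q; (iv') fderiv ℝ (fun w => fderiv ℝ S w (a,0)) (x,q) (ẋ,q̇) = ṗ(a) for all a ∈ E. -/
section SecondDerivative

variable {𝕜 V G : Type*} [NontriviallyNormedField 𝕜]
  [NormedAddCommGroup V] [NormedSpace 𝕜 V] [NormedAddCommGroup G] [NormedSpace 𝕜 G]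
  {f : V → G} {x : V}

theorem fderiv_fderiv_apply (hf : DifferentiableAt 𝕜 (fderiv 𝕜 f) x) (u v : V) :
    fderiv 𝕜 (fun w => fderiv 𝕜 f w v) x u = fderiv 𝕜 (fderiv 𝕜 f) x u v := by
  simp [fderiv_clm_apply hf (differentiableAt_const v)]

theorem fderiv_fderiv_apply_comm {n : WithTop ℕ∞} (hf : ContDiffAt 𝕜 n f x)
    (hn : minSmoothness 𝕜 2 ≤ n) (u v : V) :
    fderiv 𝕜 (fun w => fderiv 𝕜 f w v) x u = fderiv 𝕜 (fun w => fderiv 𝕜 f w u) x v := by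
  have hdiff : DifferentiableAt 𝕜 (fderiv 𝕜 f) x :=
    (hf.fderiv_right (m := 1) (le_minSmoothness.trans hn)).differentiableAt one_ne_zero
  calc
    fderiv 𝕜 (fun w => fderiv 𝕜 f w v) x u = fderiv 𝕜 (fderiv 𝕜 f) x u v :=
      fderiv_fderiv_apply hdiff u v
    _ = fderiv 𝕜 (fderiv 𝕜 f) x v u := hf.isSymmSndFDerivAt hn u v
    _ = fderiv 𝕜 (fun w => fderiv 𝕜 f w u) x v := (fderiv_fderiv_apply hdiff v u).symm

end SecondDerivative

theorem dot_generating_function_flat_general {𝕜 E Q G : Type*} [NontriviallyNormedField 𝕜]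
    [NormedAddCommGroup E] [NormedSpace 𝕜 E] [NormedAddCommGroup Q] [NormedSpace 𝕜 Q]
    [NormedAddCommGroup G] [NormedSpace 𝕜 G] {n : WithTop ℕ∞} {S : E × Q → G} {x : E} {q : Q}
    (hS : ContDiffAt 𝕜 n S (x, q)) (hn : minSmoothness 𝕜 2 ≤ n)
    (xdot : E) (qdot : Q) (y ydot : Q →L[𝕜] G) (p pdot : E →L[𝕜] G) :
    ((∀ η : Q, fderiv 𝕜 S (x, q) (0, η) = y η) ∧
     (∀ η : Q, fderiv 𝕜 (fun w => fderiv 𝕜 S w (xdot, qdot)) (x, q) (0, η) = ydot η) ∧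
     (∀ a : E, fderiv 𝕜 (fun w => fderiv 𝕜 S w (xdot, qdot)) (x, q) (a, 0) = pdot a) ∧
     (∀ b : E, fderiv 𝕜 S (x, q) (b, 0) = p b)) ↔
    ((∀ η : Q, fderiv 𝕜 S (x, q) (0, η) = y η) ∧
     (∀ b : E, fderiv 𝕜 S (x, q) (b, 0) = p b) ∧
     (∀ η : Q, fderiv 𝕜 (fun w => fderiv 𝕜 S w (0, η)) (x, q) (xdot, qdot) = ydot η) ∧
     (∀ a : E, fderiv 𝕜 (fun w => fderiv 𝕜 S w (a, 0)) (x, q) (xdot, qdot) = pdot a)) := by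
  simp only [fun v => fderiv_fderiv_apply_comm hS hn v (xdot, qdot)]
  exact ⟨fun ⟨hy, hydot, hpdot, hp⟩ => ⟨hy, hp, hydot, hpdot⟩,
    fun ⟨hy, hp, hydot, hpdot⟩ => ⟨hy, hydot, hpdot, hp⟩⟩

/-- Flat version of the verification that for a thick morphism `Φ` with generating
function `S(x;q)`, the time-derivative generating function
`Ṡ((x,ẋ),(q̇,q)) = fderiv S (x,q) (ẋ,q̇)` generates exactly the tangent prolongation
`TΦ` of the Lagrangian relation generated by `S`.  System (I) consists of the
equations `y = ∂Ṡ/∂q̇`, `ẏ = ∂Ṡ/∂q`, `ṗ = ∂Ṡ/∂x`, `p = ∂Ṡ/∂ẋ` of the relation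
generated by `Ṡ`; System (II) consists of the equations `y = ∂S/∂q`, `p = ∂S/∂x`
of `Φ` at the base point together with their formal time derivatives. -/
theorem dot_generating_function_flat {E F : Type*}
    [NormedAddCommGroup E] [NormedSpace ℝ E]
    [NormedAddCommGroup F] [NormedSpace ℝ F]
    (S : E × (F →L[ℝ] ℝ) → ℝ) (hS : ContDiff ℝ 2 S)
    (x xdot : E) (q qdot : F →L[ℝ] ℝ) (y ydot : F) (p pdot : E →L[ℝ] ℝ) :
    -- System (I)
    ((∀ η : F →L[ℝ] ℝ, fderiv ℝ S (x, q) (0, η) = η y) ∧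
     (∀ η : F →L[ℝ] ℝ,
        fderiv ℝ (fun w => fderiv ℝ S w (xdot, qdot)) (x, q) (0, η) = η ydot) ∧
     (∀ a : E, fderiv ℝ (fun w => fderiv ℝ S w (xdot, qdot)) (x, q) (a, 0) = pdot a) ∧
     (∀ b : E, fderiv ℝ S (x, q) (b, 0) = p b)) ↔
    -- System (II)
    ((∀ η : F →L[ℝ] ℝ, fderiv ℝ S (x, q) (0, η) = η y) ∧
     (∀ b : E, fderiv ℝ S (x, q) (b, 0) = p b) ∧
     (∀ η : F →L[ℝ] ℝ,
        fderiv ℝ (fun w => fderiv ℝ S w (0, η)) (x, q) (xdot, qdot) = η ydot) ∧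
     (∀ a : E, fderiv ℝ (fun w => fderiv ℝ S w (a, 0)) (x, q) (xdot, qdot) = pdot a)) :=
  dot_generating_function_flat_general hS.contDiffAt minSmoothness_of_isRCLikeNormedField.le
    xdot qdot (.apply ℝ ℝ y) (.apply ℝ ℝ ydot) p pdot
end
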